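/- Let B = L²(ℝ), let χ : ℝ → [0,2] be a smooth function with support contained in [−1,1] and χ(0) = 2, and let h : [0,∞) → [0,∞) be a strictly increasing continuous function with h(0) = 0. Define 𝓕 : B → B by (𝓕(u))(x) = χ(x)·u(x − h(‖u‖_{L²})), and let (u_n) be the sequence u_{n+1} = 𝓕(u_n) starting from any u₀ ∈ B. Then for every ε > 0, the set I_ε = {n ≥ 1 : ‖u_n‖_{L²} ≥ ε} is finite, with cardinality at most 2/h(ε) + 1. -/

import Mathlib

open MeasureTheory

/-!
Each iteration translates the function to the right by `h ‖uₙ‖` and then cuts it off to `[-1, 1]`,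
so after the first cut-off `uₙ` vanishes to the left of `-1` plus the sum of the shifts made since.
Once this sum exceeds the length of `[-1, 1]` nothing is left. Every `n` with `‖uₙ‖ ≥ ε`
contributes at least `h ε` to the sum, except that the last such `n` is not counted in the sum
preceding it: this is the `+ 1` in the bound.
-/

section CutoffTranslation

variable {G 𝕜 E : Type*} [MeasurableSpace G] {μ : Measure G} [Zero 𝕜] [Zero E] [SMulWithZero 𝕜 E]
  {χ : G → 𝕜}

lemma ae_eq_zero_of_notMem_of_ae_eq_smul {A : Set G} (hχ : Function.support χ ⊆ A) {f g : G → E}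
    (hg : g =ᵐ[μ] fun x => χ x • f x) : ∀ᵐ x ∂μ, x ∉ A → g x = 0 := by
  filter_upwards [hg] with x hx hxA
  rw [hx, Function.notMem_support.mp (Set.notMem_subset hχ hxA), zero_smul]

variable [AddCommGroup G] [LinearOrder G] [IsOrderedAddMonoid G] [MeasurableAdd G]
  [μ.IsAddRightInvariant]

lemma ae_eq_zero_of_lt_add_of_ae_eq_smul_comp_sub {f g : G → E} {c s : G}
    (hg : g =ᵐ[μ] fun x => χ x • f (x - s)) (hf : ∀ᵐ x ∂μ, x < c → f x = 0) :
    ∀ᵐ x ∂μ, x < c + s → g x = 0 := by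
  have hf_shift : ∀ᵐ x ∂μ, x - s < c → f (x - s) = 0 :=
    (measurePreserving_sub_right μ s).quasiMeasurePreserving.ae hf
  filter_upwards [hg, hf_shift] with x hgx hfx hx
  rw [hgx, hfx (sub_lt_iff_lt_add.mpr hx), smul_zero]

variable {a b : G} {s : ℕ → G} {f : ℕ → G → E} {n : ℕ}

lemma ae_eq_zero_of_lt_add_sum_shift (hχ : Function.support χ ⊆ Set.Ici a)
    (hf : ∀ n, f (n + 1) =ᵐ[μ] fun x => χ x • f n (x - s n)) (hn : 1 ≤ n) :
    ∀ᵐ x ∂μ, x < a + ∑ k ∈ Finset.Ico 1 n, s k → f n x = 0 := by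
  induction n, hn using Nat.le_induction with
  | base => simpa using ae_eq_zero_of_notMem_of_ae_eq_smul hχ (hf 0)
  | succ n hn ih =>
    simpa only [Finset.sum_Ico_succ_top hn, add_assoc] using
      ae_eq_zero_of_lt_add_of_ae_eq_smul_comp_sub (hf n) ih

lemma sum_shift_le_of_not_ae_eq_zero (hχ : Function.support χ ⊆ Set.Icc a b)
    (hf : ∀ n, f (n + 1) =ᵐ[μ] fun x => χ x • f n (x - s n)) (hn : 1 ≤ n)
    (hfn : ¬ f n =ᵐ[μ] 0) : ∑ k ∈ Finset.Ico 1 n, s k ≤ b - a := by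
  by_contra! hsum
  have hleft := ae_eq_zero_of_lt_add_sum_shift (hχ.trans Set.Icc_subset_Ici_self) hf hn
  obtain ⟨m, rfl⟩ := Nat.exists_eq_add_of_le' hn
  have hright : ∀ᵐ x ∂μ, x ∉ Set.Iic b → f (m + 1) x = 0 :=
    ae_eq_zero_of_notMem_of_ae_eq_smul (hχ.trans Set.Icc_subset_Iic_self) (hf m)
  refine hfn ?_
  filter_upwards [hleft, hright] with x hxleft hxright
  by_cases hxb : x ≤ b
  · exact hxleft (hxb.trans_lt (sub_lt_iff_lt_add'.mp hsum))
  · exact hxright hxb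

end CutoffTranslation

section Counting

lemma finite_and_ncard_le_of_forall_finset_card_le {α R : Type*} [Semiring R] [LinearOrder R]
    [IsStrictOrderedRing R] [Archimedean R] {S : Set α} {C : R}
    (hS : ∀ t : Finset α, (t : Set α) ⊆ S → (t.card : R) ≤ C) :
    S.Finite ∧ (S.ncard : R) ≤ C := by
  have hfin : S.Finite := by
    by_contra hinf
    obtain ⟨N, hN⟩ := exists_nat_gt C
    obtain ⟨t, htS, rfl⟩ := Set.Infinite.exists_subset_card_eq hinf N
    exact (hS t htS).not_gt hN
  refine ⟨hfin, ?_⟩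
  rw [Set.ncard_eq_toFinset_card S hfin]
  exact hS _ hfin.coe_toFinset.subset

lemma card_sub_one_nsmul_le_sum_Ico_max' {ι M : Type*} [LinearOrder ι] [LocallyFiniteOrder ι]
    [AddCommMonoid M] [PartialOrder M] [IsOrderedAddMonoid M] {t : Finset ι} (ht : t.Nonempty)
    {m : ι} (hm : ∀ k ∈ t, m ≤ k) {s : ι → M} (hs : ∀ k, 0 ≤ s k) {c : M}
    (hc : ∀ k ∈ t, c ≤ s k) : (t.card - 1) • c ≤ ∑ k ∈ Finset.Ico m (t.max' ht), s k := by
  have hsub : t.erase (t.max' ht) ⊆ Finset.Ico m (t.max' ht) := fun k hk =>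
    Finset.mem_Ico.mpr ⟨hm k (Finset.mem_of_mem_erase hk), t.lt_max'_of_mem_erase_max' ht hk⟩
  calc (t.card - 1) • c = (t.erase (t.max' ht)).card • c := by
        rw [Finset.card_erase_of_mem (t.max'_mem ht)]
    _ ≤ ∑ k ∈ t.erase (t.max' ht), s k :=
        Finset.card_nsmul_le_sum _ _ _ fun k hk => hc k (Finset.mem_of_mem_erase hk)
    _ ≤ ∑ k ∈ Finset.Ico m (t.max' ht), s k :=
        Finset.sum_le_sum_of_subset_of_nonneg hsub fun k _ _ => hs k

lemma finite_and_ncard_le_of_sum_Ico_le {ι R : Type*} [LinearOrder ι] [LocallyFiniteOrder ι]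
    [Field R] [LinearOrder R] [IsStrictOrderedRing R] [Archimedean R] {S : Set ι} {m : ι}
    (hm : ∀ k ∈ S, m ≤ k) {s : ι → R} (hs : ∀ k, 0 ≤ s k) {c : R} (hc : 0 < c)
    (hcs : ∀ k ∈ S, c ≤ s k) {L : R} (hL : 0 ≤ L)
    (hsum : ∀ n ∈ S, ∑ k ∈ Finset.Ico m n, s k ≤ L) :
    S.Finite ∧ (S.ncard : R) ≤ L / c + 1 := by
  refine finite_and_ncard_le_of_forall_finset_card_le fun t ht => ?_
  rcases t.eq_empty_or_nonempty with rfl | hne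
  · rw [Finset.card_empty, Nat.cast_zero]
    positivity
  · have hcard : (t.card - 1) • c ≤ L :=
      (card_sub_one_nsmul_le_sum_Ico_max' hne (fun k hk => hm k (ht hk)) hs
        fun k hk => hcs k (ht hk)).trans (hsum _ (ht (t.max'_mem hne)))
    rw [nsmul_eq_mul, Nat.cast_pred hne.card_pos] at hcard
    exact sub_le_iff_le_add.mp ((le_div_iff₀ hc).mpr hcard)

end Counting

theorem stmt_5_general {𝕜 E : Type*} [Zero 𝕜] [NormedAddCommGroup E] [SMulWithZero 𝕜 E]
    {μ : Measure ℝ} [μ.IsAddRightInvariant] {p : ENNReal} [Fact (1 ≤ p)]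
    {χ : ℝ → 𝕜} {a b : ℝ} (hab : a ≤ b) (hχ : Function.support χ ⊆ Set.Icc a b)
    {h : ℝ → ℝ} (hh_mono : MonotoneOn h (Set.Ici 0)) (hh0 : 0 ≤ h 0)
    {u : ℕ → Lp E p μ} (hu : ∀ n, u (n + 1) =ᵐ[μ] fun x => χ x • u n (x - h ‖u n‖))
    {ε : ℝ} (hε : 0 < ε) (hhε : 0 < h ε) :
    {n : ℕ | 1 ≤ n ∧ ε ≤ ‖u n‖}.Finite ∧
      ({n : ℕ | 1 ≤ n ∧ ε ≤ ‖u n‖}.ncard : ℝ) ≤ (b - a) / h ε + 1 := by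
  have hshift_nonneg (n : ℕ) : 0 ≤ h ‖u n‖ :=
    hh0.trans (hh_mono Set.self_mem_Ici (norm_nonneg _) (norm_nonneg _))
  have hne_zero {n : ℕ} (hn : ε ≤ ‖u n‖) : ¬ u n =ᵐ[μ] 0 := fun hzero =>
    norm_pos_iff.mp (hε.trans_le hn) (Lp.eq_zero_iff_ae_eq_zero.mpr hzero)
  exact finite_and_ncard_le_of_sum_Ico_le (fun _ hn => hn.1) hshift_nonneg hhε
    (fun _ hn => hh_mono hε.le (norm_nonneg _) hn.2) (sub_nonneg.mpr hab)
    fun _ hn => sum_shift_le_of_not_ae_eq_zero (f := fun n => u n) hχ hu hn.1 (hne_zero hn.2)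

/-- for the map `𝓕(u)(x) = χ(x) u(x - h(‖u‖))` on `L²(ℝ)`, the set
`I_ε = {n ≥ 1 : ‖u_n‖ ≥ ε}` is finite, with cardinality at most `2/h(ε) + 1`. -/
theorem stmt_5 (χ : ℝ → ℝ) (hχ_smooth : ContDiff ℝ (⊤ : ℕ∞) χ)
    (hχ_range : ∀ x, χ x ∈ Set.Icc (0 : ℝ) 2)
    (hχ_supp : Function.support χ ⊆ Set.Icc (-1 : ℝ) 1)
    (hχ0 : χ 0 = 2)
    (h : ℝ → ℝ) (hh_mono : StrictMonoOn h (Set.Ici 0))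
    (hh_cont : ContinuousOn h (Set.Ici 0))
    (hh_nonneg : ∀ s : ℝ, 0 ≤ s → 0 ≤ h s) (hh0 : h 0 = 0)
    (F : Lp ℝ 2 (volume : Measure ℝ) → Lp ℝ 2 (volume : Measure ℝ))
    (hF : ∀ u : Lp ℝ 2 (volume : Measure ℝ),
      (F u : ℝ → ℝ) =ᵐ[volume] fun x => χ x * (u : ℝ → ℝ) (x - h ‖u‖))
    (u : ℕ → Lp ℝ 2 (volume : Measure ℝ)) (hu : ∀ n, u (n + 1) = F (u n))
    (ε : ℝ) (hε : 0 < ε) :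
    {n : ℕ | 1 ≤ n ∧ ε ≤ ‖u n‖}.Finite ∧
      ({n : ℕ | 1 ≤ n ∧ ε ≤ ‖u n‖}.ncard : ℝ) ≤ 2 / h ε + 1 := by
  have hhε : 0 < h ε := hh0 ▸ hh_mono Set.self_mem_Ici hε.le hε
  simpa only [sub_neg_eq_add, one_add_one_eq_two] using stmt_5_general (by norm_num) hχ_supp
    hh_mono.monotoneOn hh0.ge (fun n => hu n ▸ hF (u n)) hε hhε
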